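/- Maximum-principle barrier estimate: Let w(x,t) solve the graphical mean curvature flow ∂w/∂t = √(1+|Dw|²) div(Dw/√(1+|Dw|²)) on ℝⁿ × [0, R²], R > 1. If ρ² > 2n+1, then sup_{|x|≤R} |w(x, R²)| ≤ sup_{|x|≤ρR} |w(x,0)| + √(2n+1)·R + 1. -/

import Mathlib

open Real MeasureTheory Metric Filter
open scoped RealInnerProductSpace ENNReal NNReal

noncomputable section

abbrev E (n : ℕ) : Type := EuclideanSpace ℝ (Fin n)

variable {n : ℕ}

/-- `√(1 + |Du|²)`, the area element of the graph of `u`. -/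
def aEl (u : E n → ℝ) (x : E n) : ℝ := Real.sqrt (1 + ‖gradient u x‖ ^ 2)

/-- The vector field `Du/√(1+|Du|²)`. -/
def Vfield (u : E n → ℝ) (x : E n) : E n := (aEl u x)⁻¹ • gradient u x

/-- `div (Du/√(1+|Du|²))`. -/
def divV (u : E n → ℝ) (x : E n) : ℝ :=
  ∑ i, fderiv ℝ (fun y => Vfield u y i) x (EuclideanSpace.single i 1)

/-- The self-shrinker equation for an entire graph. -/
def ShrinkerEq (u : E n → ℝ) : Prop :=
  ∀ x, divV u x = (⟪x, gradient u x⟫ - u x) / (2 * aEl u x)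

/-- The mean curvature of the graph of `u` with respect to the upward unit normal. -/
def meanCurv (u : E n → ℝ) (x : E n) : ℝ := -divV u x

/-- The position vector `X = (x, u x)` of a point of the graph. -/
def Pos (u : E n → ℝ) (x : E n) : E (n + 1) :=
  (WithLp.equiv 2 (Fin (n + 1) → ℝ)).symm (Fin.snoc ((WithLp.equiv 2 (Fin n → ℝ)) x) (u x))

/-- The upward unit normal `n = (-Du, 1)/√(1+|Du|²)` at the point of the graph over `x`. -/
def NmlAt (u : E n → ℝ) (x : E n) : E (n + 1) :=
  (WithLp.equiv 2 (Fin (n + 1) → ℝ)).symm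
    (Fin.snoc (fun i => -(Vfield u x i)) ((aEl u x)⁻¹))

/-- Projection of `ℝ^{n+1}` onto the first `n` coordinates. -/
def projE (p : E (n + 1)) : E n :=
  (WithLp.equiv 2 (Fin n → ℝ)).symm fun i => p i.castSucc

/-- The unit normal of the graph, extended to `ℝ^{n+1}` independently of the last coordinate. -/
def Nml (u : E n → ℝ) (p : E (n + 1)) : E (n + 1) := NmlAt u (projE p)

/-- The inverse induced metric `g^{ij} = δ_{ij} - u_i u_j/(1+|Du|²)` of the graph. -/
def ginv (u : E n → ℝ) (x : E n) (i j : Fin n) : ℝ :=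
  (if i = j then 1 else 0) - gradient u x i * gradient u x j / (aEl u x) ^ 2

/-- The Hessian `u_{ij}` of `u`. -/
def hess (u : E n → ℝ) (x : E n) (i j : Fin n) : ℝ :=
  fderiv ℝ (fun y => gradient u y j) x (EuclideanSpace.single i 1)

/-- `|A|²`, the squared norm of the second fundamental form of the graph of `u`:
`|A|² = g^{ik} g^{jl} h_{ij} h_{kl}` with `h_{ij} = u_{ij}/√(1+|Du|²)`. -/
def A2 (u : E n → ℝ) (x : E n) : ℝ :=
  (∑ i, ∑ j, ∑ k, ∑ l, ginv u x i k * ginv u x j l * hess u x i j * hess u x k l) /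
    (aEl u x) ^ 2

/-- Coordinate components `g^{ij} ∂_j f` of the tangential gradient. -/
def gradCoord (u f : E n → ℝ) (x : E n) (i : Fin n) : ℝ :=
  ∑ j, ginv u x i j * gradient f x j

/-- The tangential gradient `∇_Σ f` (for `f` defined on the base, pulled back to the graph),
as a vector in `ℝ^{n+1}`. -/
def gradSigma (u f : E n → ℝ) (x : E n) : E (n + 1) :=
  (WithLp.equiv 2 (Fin (n + 1) → ℝ)).symm
    (Fin.snoc (fun i => gradCoord u f x i) (∑ i, gradient u x i * gradCoord u f x i))

/-- The Laplace–Beltrami operator of the graph: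
`Δ_Σ f = (1/√g) ∂_i (√g g^{ij} ∂_j f)`. -/
def lapSigma (u f : E n → ℝ) (x : E n) : ℝ :=
  (aEl u x)⁻¹ *
    ∑ i, fderiv ℝ (fun y => aEl u y * gradCoord u f y i) x (EuclideanSpace.single i 1)

/-- The tangential gradient `∇_Σ η` of an ambient function `η : ℝ^{n+1} → ℝ` along the graph:
the ambient gradient minus its normal component. -/
def gradSigmaAmb (u : E n → ℝ) (η : E (n + 1) → ℝ) (x : E n) : E (n + 1) :=
  gradient η (Pos u x) - ⟪gradient η (Pos u x), NmlAt u x⟫ • NmlAt u x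

/-- `Vol(Σ ∩ B_R)`: the area of the part of the graph inside the ball of radius `R`
in `ℝ^{n+1}`, computed by the area formula. -/
def sVol (u : E n → ℝ) (R : ℝ) : ℝ := ∫ x in {x : E n | ‖Pos u x‖ ≤ R}, aEl u x

/-- `M_R = sup_{|x| ≤ R} |u|`. -/
def supBall (u : E n → ℝ) (R : ℝ) : ℝ := ⨆ x : Metric.closedBall (0 : E n) R, |u x.1|

end

/-!
Let `d` be the squared distance from a point of the moving graph to a fixed point `(0, a)` of the
axis. At a spatial minimum of `d`, contracting `D²d ≥ 0` with the inverse metric `g⁻¹ ≥ 0` gives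
`∂d/∂t ≥ -2n`, because `g^{ij} g_{ij} = n` and `√(1+|Dw|²) div (Dw/√(1+|Dw|²)) = g^{ij} w_{ij}`.
By the parabolic minimum principle, a graph that starts outside the sphere of radius `r` about
`(0, a)` stays outside the sphere of radius `√(r² - 2nt)`. The spheres centred at height `±(M + r)`,
with `M` the supremum of `|w(·, 0)|` over the ball of radius `r`, start on either side of the graph.
By continuity in time the graph over a point that the spheres still cover stays between them, which
bounds `|w|` there by `M + r - √(r² - |x|² - 2nt)`.
-/

section Calculus

theorem deriv_deriv_nonneg_of_isLocalMin {f : ℝ → ℝ} {s : ℝ} (hmin : IsLocalMin f s)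
    (hf : ContinuousAt f s) : 0 ≤ deriv (deriv f) s := by
  by_contra! hneg
  have hmax : IsLocalMax f s := isLocalMax_of_deriv_deriv_neg hneg hmin.deriv_eq_zero hf
  have hconst : f =ᶠ[nhds s] fun _ => f s := by
    filter_upwards [hmin, hmax] with y h₁ h₂ using le_antisymm h₂ h₁
  have hzero : deriv (deriv f) s = 0 := by simp [hconst.deriv.deriv_eq]
  exact hneg.ne hzero

theorem hasDerivWithinAt_nonpos_of_isMinOn_Icc {f : ℝ → ℝ} {c a b t : ℝ}
    (hmin : IsMinOn f (Set.Icc a b) t) (ht : t ∈ Set.Ioc a b)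
    (hf : HasDerivWithinAt f c (Set.Icc a b) t) : c ≤ 0 := by
  have hseg : segment ℝ t a ⊆ Set.Icc a b :=
    (convex_Icc a b).segment_subset (Set.Ioc_subset_Icc_self ht)
      (Set.left_mem_Icc.2 (ht.1.le.trans ht.2))
  have h : 0 ≤ (a - t) * c := by
    simpa using hmin.localize.hasFDerivWithinAt_nonneg hf.hasFDerivWithinAt
      (sub_mem_posTangentConeAt_of_segment_subset hseg)
  exact nonpos_of_mul_nonneg_right h (sub_neg.2 ht.1)

theorem le_neg_sqrt_of_forall_le_sq {f : ℝ → ℝ} {a b c : ℝ} (hf : ContinuousOn f (Set.Icc a b))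
    (hab : a ≤ b) (hc : 0 < c) (ha : f a ≤ 0) (hsq : ∀ s ∈ Set.Icc a b, c ≤ f s ^ 2) :
    f b ≤ -√c := by
  have hne (s : ℝ) (hs : s ∈ Set.Icc a b) : f s ≠ 0 := fun h => by
    simpa [h, hc.not_ge] using hsq s hs
  have hneg : f b < 0 := by
    by_contra! hnonneg
    obtain ⟨s, hs, hfs⟩ := intermediate_value_Icc hab hf ⟨ha, hnonneg⟩
    exact hne s hs hfs
  have habs : √c ≤ |f b| := by
    simpa [Real.sqrt_sq_eq_abs] using Real.sqrt_le_sqrt (hsq b (Set.right_mem_Icc.2 hab))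
  rw [abs_of_neg hneg] at habs
  linarith

theorem sub_sqrt_sq_sub_le_sqrt {r q : ℝ} (hq : 0 ≤ q) (hqr : q ≤ r ^ 2) :
    r - √(r ^ 2 - q) ≤ √q := by
  refine sub_le_iff_le_add.2 (le_of_sq_le_sq ?_ (by positivity))
  have hprod : 0 ≤ √q * √(r ^ 2 - q) := by positivity
  rw [add_sq, Real.sq_sqrt hq, Real.sq_sqrt (sub_nonneg.2 hqr)]
  linarith

theorem eventually_differentiableAt_of_contDiffAt {V : Type*} [NormedAddCommGroup V]
    [NormedSpace ℝ V] {f : V → ℝ} {x : V} (hf : ContDiffAt ℝ 2 f x) :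
    ∀ᶠ y in nhds x, DifferentiableAt ℝ f y :=
  (hf.eventually (by simp)).mono fun _ hy => hy.differentiableAt two_ne_zero

variable {F : Type*} [NormedAddCommGroup F] [InnerProductSpace ℝ F] [CompleteSpace F]
  {f : F → ℝ} {x : F}

theorem differentiableAt_gradient_of_contDiffAt (hf : ContDiffAt ℝ 2 f x) :
    DifferentiableAt ℝ (gradient f) x :=
  (InnerProductSpace.toDual ℝ F).symm.differentiable.differentiableAt.comp x
    ((hf.fderiv_right (m := 1) le_rfl).differentiableAt one_ne_zero)

theorem inner_fderiv_gradient_nonneg_of_isLocalMin (hf : ContDiffAt ℝ 2 f x)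
    (hmin : IsLocalMin f x) (b : F) : 0 ≤ ⟪fderiv ℝ (gradient f) x b, b⟫ := by
  set line : ℝ → F := fun s => x + s • b with hline_def
  have hline (s : ℝ) : HasDerivAt line b s := by
    simpa [hline_def] using ((hasDerivAt_id s).smul_const b).const_add x
  have hline0 : line 0 = x := by simp [hline_def]
  have htendsto : Tendsto line (nhds 0) (nhds x) := hline0 ▸ (hline 0).continuousAt.tendsto
  have hderiv : deriv (f ∘ line) =ᶠ[nhds 0] fun s => ⟪gradient f (line s), b⟫ := by
    filter_upwards [htendsto.eventually (eventually_differentiableAt_of_contDiffAt hf)] with s hs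
    rw [inner_gradient_left]
    exact (hs.hasFDerivAt.comp_hasDerivAt s (hline s)).deriv
  have hgrad : HasFDerivAt (gradient f) (fderiv ℝ (gradient f) x) (line 0) :=
    hline0.symm ▸ (differentiableAt_gradient_of_contDiffAt hf).hasFDerivAt
  have hderiv₂ : deriv (deriv (f ∘ line)) 0 = ⟪fderiv ℝ (gradient f) x b, b⟫ := by
    rw [hderiv.deriv_eq]
    simpa using ((hgrad.comp_hasDerivAt 0 (hline 0)).inner ℝ (hasDerivAt_const 0 b)).deriv
  have hmin_line : IsLocalMin (f ∘ line) 0 := by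
    filter_upwards [htendsto.eventually hmin] with s hs
    simpa [hline0] using hs
  have hcont : ContinuousAt (f ∘ line) 0 :=
    ContinuousAt.comp (hline0.symm ▸ hf.continuousAt) (hline 0).continuousAt
  exact hderiv₂ ▸ deriv_deriv_nonneg_of_isLocalMin hmin_line hcont

end Calculus

section ParabolicMinimumPrinciple

variable {X : Type*} [TopologicalSpace X] {K : Set X} {F : X → ℝ → ℝ} {T m : ℝ}

theorem le_of_forall_isLocalMin_hasDerivWithinAt_pos (hK : IsCompact K)
    (hF : ContinuousOn (Function.uncurry F) (K ×ˢ Set.Icc 0 T))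
    (hinit : ∀ x ∈ K, m ≤ F x 0)
    (hlat : ∀ x ∈ K \ interior K, ∀ t ∈ Set.Icc 0 T, m ≤ F x t)
    (hint : ∀ x ∈ interior K, ∀ t ∈ Set.Ioc 0 T, IsLocalMin (fun y => F y t) x →
      ∃ c, 0 < c ∧ HasDerivWithinAt (F x) c (Set.Icc 0 T) t) :
    ∀ x ∈ K, ∀ t ∈ Set.Icc 0 T, m ≤ F x t := by
  intro x hx t ht
  obtain ⟨⟨y, s⟩, ⟨hy : y ∈ K, hs : s ∈ Set.Icc 0 T⟩, hmin⟩ :=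
    (hK.prod isCompact_Icc).exists_isMinOn ⟨(x, t), hx, ht⟩ hF
  refine le_trans ?_ (hmin (Set.mk_mem_prod hx ht))
  change m ≤ F y s
  by_contra! hlt
  have hy_int : y ∈ interior K := by
    by_contra hy'
    exact hlt.not_ge (hlat y ⟨hy, hy'⟩ s hs)
  have hs_pos : 0 < s := hs.1.lt_of_ne fun h => hlt.not_ge (h ▸ hinit y hy)
  have hspace : IsLocalMin (fun z => F z s) y := by
    filter_upwards [mem_interior_iff_mem_nhds.1 hy_int] with z hz
      using hmin (Set.mk_mem_prod hz hs)
  obtain ⟨c, hc, hderiv⟩ := hint y hy_int s ⟨hs_pos, hs.2⟩ hspace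
  have htime : IsMinOn (F y) (Set.Icc 0 T) s := fun τ hτ => hmin (Set.mk_mem_prod hy hτ)
  exact hc.not_ge (hasDerivWithinAt_nonpos_of_isMinOn_Icc htime ⟨hs_pos, hs.2⟩ hderiv)

theorem le_of_forall_isLocalMin_hasDerivWithinAt_nonneg (hK : IsCompact K)
    (hF : ContinuousOn (Function.uncurry F) (K ×ˢ Set.Icc 0 T))
    (hinit : ∀ x ∈ K, m ≤ F x 0)
    (hlat : ∀ x ∈ K \ interior K, ∀ t ∈ Set.Icc 0 T, m ≤ F x t)
    (hint : ∀ x ∈ interior K, ∀ t ∈ Set.Ioc 0 T, IsLocalMin (fun y => F y t) x →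
      ∃ c, 0 ≤ c ∧ HasDerivWithinAt (F x) c (Set.Icc 0 T) t) :
    ∀ x ∈ K, ∀ t ∈ Set.Icc 0 T, m ≤ F x t := by
  intro x hx t ht
  have hperturbed (ε : ℝ) (hε : 0 < ε) : m ≤ F x t + ε * t := by
    refine le_of_forall_isLocalMin_hasDerivWithinAt_pos (F := fun y s => F y s + ε * s) hK
      (hF.add (by fun_prop)) (by simpa using hinit) (fun y hy s hs => ?_)
      (fun y hy s hs hmin => ?_) x hx t ht
    · exact le_add_of_le_of_nonneg (hlat y hy s hs) (mul_nonneg hε.le hs.1)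
    · have hmin' : IsLocalMin (fun z => F z s) y := hmin.mono fun z hz => by simpa using hz
      obtain ⟨c, hc, hderiv⟩ := hint y hy s hs hmin'
      refine ⟨c + ε, by positivity, hderiv.add ?_⟩
      simpa using (hasDerivWithinAt_id s (Set.Icc 0 T)).const_mul ε
  have hlim : Tendsto (fun ε : ℝ => F x t + ε * t) (nhdsWithin 0 (Set.Ioi 0)) (nhds (F x t)) := by
    have hcont : Continuous fun ε : ℝ => F x t + ε * t := by fun_prop
    simpa using (hcont.tendsto 0).mono_left nhdsWithin_le_nhds
  exact ge_of_tendsto hlim (eventually_mem_nhdsWithin.mono hperturbed)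

end ParabolicMinimumPrinciple

theorem sum_sum_mul_nonneg_of_posSemidef {ι : Type*} [Fintype ι] {A B : Matrix ι ι ℝ}
    (hA : A.PosSemidef) (hB : ∀ v : ι → ℝ, 0 ≤ ∑ i, ∑ j, v i * v j * B i j) :
    0 ≤ ∑ i, ∑ j, A i j * B i j := by
  obtain ⟨m, v, rfl⟩ := Matrix.posSemidef_iff_eq_sum_vecMulVec.1 hA
  have hsum : ∑ i, ∑ j, (∑ k, Matrix.vecMulVec (v k) (star (v k))) i j * B i j =
      ∑ k, ∑ i, ∑ j, v k i * v k j * B i j := by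
    simp only [Matrix.sum_apply, Matrix.vecMulVec_apply, star_trivial, Finset.sum_mul]
    rw [Finset.sum_comm_cycle]
  exact hsum ▸ Finset.sum_nonneg fun k _ => hB (v k)

section MeanCurvatureOperator

variable {n : ℕ} {u : E n → ℝ} {x : E n}

theorem aEl_pos (u : E n → ℝ) (x : E n) : 0 < aEl u x := Real.sqrt_pos.2 (by positivity)

theorem aEl_sq (u : E n → ℝ) (x : E n) : aEl u x ^ 2 = 1 + ‖gradient u x‖ ^ 2 :=
  Real.sq_sqrt (by positivity)

theorem gradient_apply (u : E n → ℝ) (x : E n) (i : Fin n) :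
    gradient u x i = fderiv ℝ u x (EuclideanSpace.single i 1) := by
  rw [← inner_gradient_left, EuclideanSpace.inner_single_right]
  simp

theorem hasFDerivAt_gradient_apply (hu : DifferentiableAt ℝ (gradient u) x) (j : Fin n) :
    HasFDerivAt (fun y => gradient u y j)
      (EuclideanSpace.proj j ∘L fderiv ℝ (gradient u) x) x :=
  (EuclideanSpace.proj (𝕜 := ℝ) j).hasFDerivAt.comp x hu.hasFDerivAt

theorem hess_eq_fderiv_gradient_apply (hu : DifferentiableAt ℝ (gradient u) x) (i j : Fin n) :
    hess u x i j = fderiv ℝ (gradient u) x (EuclideanSpace.single i 1) j := by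
  simp [hess, (hasFDerivAt_gradient_apply hu j).fderiv]

theorem sum_sum_mul_mul_hess (hu : DifferentiableAt ℝ (gradient u) x) (v : Fin n → ℝ) :
    ∑ i, ∑ j, v i * v j * hess u x i j =
      ⟪fderiv ℝ (gradient u) x (WithLp.toLp 2 v), WithLp.toLp 2 v⟫ := by
  have hv : WithLp.toLp 2 v = ∑ i, v i • EuclideanSpace.single i (1 : ℝ) := by
    simpa using ((EuclideanSpace.basisFun (Fin n) ℝ).sum_repr (WithLp.toLp 2 v)).symm
  conv_rhs => enter [2]; rw [hv]
  simp only [map_sum, map_smul, sum_inner, inner_smul_left, PiLp.inner_apply,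
    hess_eq_fderiv_gradient_apply hu, Finset.mul_sum]
  simp [mul_assoc]

/-- The induced metric `g_{ij} = δ_{ij} + u_i u_j` of the graph of `u`, in the coordinates of the
base; its inverse is `ginv u x`. -/
noncomputable def inducedMetric (u : E n → ℝ) (x : E n) : Matrix (Fin n) (Fin n) ℝ :=
  1 + Matrix.vecMulVec (gradient u x).ofLp (gradient u x).ofLp

theorem of_ginv_mul_inducedMetric (u : E n → ℝ) (x : E n) :
    Matrix.of (ginv u x) * inducedMetric u x = 1 := by
  set P := Matrix.vecMulVec (gradient u x).ofLp (gradient u x).ofLp with hP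
  have hP_sq : P * P = ‖gradient u x‖ ^ 2 • P := by
    rw [hP, Matrix.vecMulVec_mul_vecMulVec, EuclideanSpace.real_norm_sq_eq]
    simp [dotProduct, sq, Matrix.vecMulVec_smul]
  have hginv : Matrix.of (ginv u x) = 1 - (aEl u x ^ 2)⁻¹ • P := by
    ext i j
    simp [ginv, hP, Matrix.one_apply, Matrix.vecMulVec_apply, div_eq_inv_mul]
  have hcoeff : (aEl u x ^ 2)⁻¹ + (aEl u x ^ 2)⁻¹ * ‖gradient u x‖ ^ 2 = 1 := by
    rw [aEl_sq]
    field_simp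
  calc Matrix.of (ginv u x) * inducedMetric u x
      = 1 + (1 - ((aEl u x ^ 2)⁻¹ + (aEl u x ^ 2)⁻¹ * ‖gradient u x‖ ^ 2)) • P := by
        rw [hginv, inducedMetric, ← hP, sub_mul, mul_add, mul_add, smul_mul_assoc, smul_mul_assoc,
          hP_sq]
        simp only [one_mul, mul_one]
        module
    _ = 1 := by simp [hcoeff]

theorem posSemidef_inducedMetric (u : E n → ℝ) (x : E n) : (inducedMetric u x).PosSemidef :=
  Matrix.PosSemidef.one.add
    (by simpa using Matrix.posSemidef_vecMulVec_self_star (gradient u x).ofLp)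

theorem posSemidef_of_ginv (u : E n → ℝ) (x : E n) : (Matrix.of (ginv u x)).PosSemidef :=
  Matrix.inv_eq_left_inv (of_ginv_mul_inducedMetric u x) ▸ (posSemidef_inducedMetric u x).inv

theorem sum_sum_ginv_mul_inducedMetric (u : E n → ℝ) (x : E n) :
    ∑ i, ∑ j, ginv u x i j * inducedMetric u x i j = n := by
  have hsymm (i j : Fin n) : inducedMetric u x i j = inducedMetric u x j i :=
    (posSemidef_inducedMetric u x).isHermitian.apply j i
  calc ∑ i, ∑ j, ginv u x i j * inducedMetric u x i j
      = (Matrix.of (ginv u x) * inducedMetric u x).trace := by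
        simp only [Matrix.trace, Matrix.diag, Matrix.mul_apply, Matrix.of_apply, hsymm]
    _ = n := by simp [of_ginv_mul_inducedMetric]

theorem hasFDerivAt_aEl (hu : DifferentiableAt ℝ (gradient u) x) :
    HasFDerivAt (aEl u)
      ((aEl u x)⁻¹ • (innerSL ℝ (gradient u x) ∘L fderiv ℝ (gradient u) x)) x := by
  refine ((hu.hasFDerivAt.norm_sq.const_add 1).sqrt (by positivity)).congr_fderiv ?_
  rw [← aEl, ← Nat.cast_smul_eq_nsmul ℝ, smul_smul]
  congr 1
  have := aEl_pos u x
  push_cast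
  field_simp

theorem aEl_mul_fderiv_Vfield (hu : DifferentiableAt ℝ (gradient u) x) (i : Fin n) :
    aEl u x * fderiv ℝ (fun y => Vfield u y i) x (EuclideanSpace.single i 1) =
      ∑ j, ginv u x i j * hess u x i j := by
  have hpos := aEl_pos u x
  have hinv := (hasDerivAt_inv hpos.ne').comp_hasFDerivAt x (hasFDerivAt_aEl hu)
  have hV : (fun y => Vfield u y i) = (Inv.inv ∘ aEl u) * fun y => gradient u y i := by
    ext y
    simp [Vfield]
  have hinner : ⟪gradient u x, fderiv ℝ (gradient u) x (EuclideanSpace.single i 1)⟫ =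
      ∑ j, gradient u x j * hess u x i j := by
    simp only [PiLp.inner_apply, hess_eq_fderiv_gradient_apply hu, RCLike.inner_apply,
      conj_trivial, mul_comm]
  have hcontract : ∑ j, ginv u x i j * hess u x i j =
      hess u x i i - gradient u x i / aEl u x ^ 2 * ∑ j, gradient u x j * hess u x i j := by
    simp only [ginv, sub_mul, Finset.sum_sub_distrib, ite_mul, one_mul, zero_mul,
      Finset.sum_ite_eq, Finset.mem_univ, if_true, Finset.mul_sum]
    exact congrArg _ (Finset.sum_congr rfl fun j _ => by ring)
  rw [hV, (hinv.mul (hasFDerivAt_gradient_apply hu i)).fderiv, hcontract]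
  simp only [Function.comp_apply, neg_smul, smul_neg, add_apply, smul_apply, neg_apply,
    ContinuousLinearMap.comp_apply, PiLp.proj_apply, ← hess_eq_fderiv_gradient_apply hu,
    smul_eq_mul, coe_innerSL_apply, hinner]
  field_simp
  ring

theorem aEl_mul_divV (hu : DifferentiableAt ℝ (gradient u) x) :
    aEl u x * divV u x = ∑ i, ∑ j, ginv u x i j * hess u x i j := by
  simp only [divV, Finset.mul_sum, aEl_mul_fderiv_Vfield hu]

theorem sum_sum_ginv_mul_hess_nonneg_of_isLocalMin {f : E n → ℝ} (hf : ContDiffAt ℝ 2 f x)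
    (hmin : IsLocalMin f x) (u : E n → ℝ) : 0 ≤ ∑ i, ∑ j, ginv u x i j * hess f x i j :=
  sum_sum_mul_nonneg_of_posSemidef (posSemidef_of_ginv u x) fun v => by
    rw [sum_sum_mul_mul_hess (differentiableAt_gradient_of_contDiffAt hf)]
    exact inner_fderiv_gradient_nonneg_of_isLocalMin hf hmin _

/-- The squared distance in `ℝ^{n+1}` from the point `(x, u x)` of the graph of `u` to the point
`(0, a)` of the vertical axis. -/
noncomputable def axisDistSq (u : E n → ℝ) (a : ℝ) (x : E n) : ℝ := (u x - a) ^ 2 + ‖x‖ ^ 2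

theorem hasFDerivAt_axisDistSq (hu : DifferentiableAt ℝ u x) (a : ℝ) :
    HasFDerivAt (axisDistSq u a) (2 • ((u x - a) • fderiv ℝ u x + innerSL ℝ x)) x := by
  refine (((hu.hasFDerivAt.sub_const a).pow 2).add (hasFDerivAt_id x).norm_sq).congr_fderiv ?_
  ext y
  simp only [Nat.add_one_sub_one, pow_one, nsmul_eq_mul, Nat.cast_ofNat, id_eq,
    ContinuousLinearMap.comp_id, add_apply, smul_apply, smul_eq_mul, coe_innerSL_apply]
  ring

theorem gradient_axisDistSq_apply (hu : DifferentiableAt ℝ u x) (a : ℝ) (j : Fin n) :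
    gradient (axisDistSq u a) x j = 2 * ((u x - a) * gradient u x j + x j) := by
  simp [gradient_apply, (hasFDerivAt_axisDistSq hu a).fderiv, EuclideanSpace.inner_single_right,
    mul_add]

theorem hess_axisDistSq (hu : ContDiffAt ℝ 2 u x) (a : ℝ) (i j : Fin n) :
    hess (axisDistSq u a) x i j = 2 * ((u x - a) * hess u x i j + inducedMetric u x i j) := by
  have hgrad : (fun y => gradient (axisDistSq u a) y j) =ᶠ[nhds x]
      fun y => 2 * ((u y - a) * gradient u y j + y j) := by
    filter_upwards [eventually_differentiableAt_of_contDiffAt hu] with y hy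
      using gradient_axisDistSq_apply hy a j
  have hgrad_u := differentiableAt_gradient_of_contDiffAt hu
  have hderiv : HasFDerivAt (fun y => 2 * ((u y - a) * gradient u y j + y j))
      ((2 : ℝ) • ((u x - a) • (EuclideanSpace.proj j ∘L fderiv ℝ (gradient u) x) +
        gradient u x j • fderiv ℝ u x + EuclideanSpace.proj j)) x :=
    ((((hu.differentiableAt two_ne_zero).hasFDerivAt.sub_const a).mul
      (hasFDerivAt_gradient_apply hgrad_u j)).add
      (EuclideanSpace.proj (𝕜 := ℝ) j).hasFDerivAt).const_mul 2
  rw [hess, hgrad.fderiv_eq, hderiv.fderiv]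
  simp only [inducedMetric, Matrix.add_apply, Matrix.one_apply, Matrix.vecMulVec_apply,
    smul_apply, add_apply, ContinuousLinearMap.comp_apply, PiLp.proj_apply, PiLp.single_apply,
    smul_eq_mul, gradient_apply u x i, hess_eq_fderiv_gradient_apply hgrad_u, eq_comm (a := j)]
  ring

theorem mul_aEl_mul_divV_add_nonneg_of_isLocalMin_axisDistSq (hu : ContDiffAt ℝ 2 u x) {a : ℝ}
    (hmin : IsLocalMin (axisDistSq u a) x) :
    0 ≤ (u x - a) * (aEl u x * divV u x) + n := by
  have hdist : ContDiffAt ℝ 2 (axisDistSq u a) x :=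
    ((hu.sub contDiffAt_const).pow 2).add (contDiff_norm_sq ℝ).contDiffAt
  have hnonneg := sum_sum_ginv_mul_hess_nonneg_of_isLocalMin hdist hmin u
  have htrace : ∑ i, ∑ j, ginv u x i j * hess (axisDistSq u a) x i j =
      2 * ((u x - a) * (aEl u x * divV u x) + n) := by
    rw [aEl_mul_divV (differentiableAt_gradient_of_contDiffAt hu),
      ← sum_sum_ginv_mul_inducedMetric u x]
    simp only [hess_axisDistSq hu, Finset.mul_sum, ← Finset.sum_add_distrib]
    exact Finset.sum_congr rfl fun i _ => Finset.sum_congr rfl fun j _ => by ring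
  linarith

end MeanCurvatureOperator

section Avoidance

variable {n : ℕ} {w : E n → ℝ → ℝ} {K : Set (E n)} {r T : ℝ}

/-- Classical solutions `w` of the graphical mean curvature flow
`∂w/∂t = √(1+|Dw|²) div (Dw/√(1+|Dw|²))` on `interior K × (0, T]` that are continuous up to the
boundary. The time derivative is taken within `[0, T]`, so it is one-sided at `t = T`. -/
structure IsGraphicalMCFOn (w : E n → ℝ → ℝ) (K : Set (E n)) (T : ℝ) : Prop where
  continuousOn : ContinuousOn (Function.uncurry w) (K ×ˢ Set.Icc 0 T)
  contDiffAt : ∀ x ∈ interior K, ∀ t ∈ Set.Ioc 0 T, ContDiffAt ℝ 2 (fun y => w y t) x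
  hasDerivWithinAt : ∀ x ∈ interior K, ∀ t ∈ Set.Ioc 0 T, HasDerivWithinAt (w x)
    (aEl (fun y => w y t) x * divV (fun y => w y t) x) (Set.Icc 0 T) t

theorem isGraphicalMCFOn_of_contDiff (hw : ContDiff ℝ 2 fun p : E n × ℝ => w p.1 p.2)
    (hflow : ∀ x : E n, ∀ t ∈ Set.Icc 0 T,
      deriv (w x) t = aEl (fun y => w y t) x * divV (fun y => w y t) x) (K : Set (E n)) :
    IsGraphicalMCFOn w K T where
  continuousOn := hw.continuous.continuousOn
  contDiffAt _ _ t _ := (hw.comp (contDiff_prodMk_left t)).contDiffAt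
  hasDerivWithinAt x _ t ht := by
    have hdiff : DifferentiableAt ℝ (w x) t :=
      (hw.comp (contDiff_prodMk_right x)).differentiable two_ne_zero t
    exact hflow x t (Set.Ioc_subset_Icc_self ht) ▸ hdiff.hasDerivAt.hasDerivWithinAt

namespace IsGraphicalMCFOn

theorem continuousOn_time (hw : IsGraphicalMCFOn w K T) {x : E n} (hx : x ∈ K) :
    ContinuousOn (w x) (Set.Icc 0 T) :=
  hw.continuousOn.comp (by fun_prop) fun _ ht => Set.mk_mem_prod hx ht

theorem continuousOn_initial (hw : IsGraphicalMCFOn w K T) (hT : 0 ≤ T) :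
    ContinuousOn (fun y => w y 0) K :=
  hw.continuousOn.comp (f := fun y => (y, (0 : ℝ))) (by fun_prop)
    fun _ hx => Set.mk_mem_prod hx (Set.left_mem_Icc.2 hT)

theorem hasDerivWithinAt_axisDistSq (hw : IsGraphicalMCFOn w K T) {x : E n} {t : ℝ}
    (hx : x ∈ interior K) (ht : t ∈ Set.Ioc 0 T) (a : ℝ) :
    HasDerivWithinAt (fun s => axisDistSq (fun y => w y s) a x)
      (2 * ((w x t - a) * (aEl (fun y => w y t) x * divV (fun y => w y t) x)))
      (Set.Icc 0 T) t := by
  refine ((((hw.hasDerivWithinAt x hx t ht).sub_const a).pow 2).add_const _).congr_deriv ?_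
  simp only [Nat.cast_ofNat, Nat.add_one_sub_one, pow_one]
  ring

theorem sphere_avoidance (hw : IsGraphicalMCFOn w (closedBall 0 r) T) {a : ℝ}
    (h0 : ∀ x : E n, ‖x‖ ≤ r → r ^ 2 ≤ (w x 0 - a) ^ 2) {x : E n} (hx : ‖x‖ ≤ r) {t : ℝ}
    (ht : t ∈ Set.Icc 0 T) : r ^ 2 ≤ axisDistSq (fun y => w y t) a x + 2 * n * t := by
  have hr : 0 ≤ r := (norm_nonneg x).trans hx
  refine le_of_forall_isLocalMin_hasDerivWithinAt_nonneg
    (F := fun y s => axisDistSq (fun z => w z s) a y + 2 * n * s)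
    (isCompact_closedBall (0 : E n) r) ?_ (fun y hy => ?_) (fun y hy s hs => ?_)
    (fun y hy s hs hmin => ?_) x (mem_closedBall_zero_iff.2 hx) t ht
  · have hdist : ContinuousOn (fun q : E n × ℝ => (w q.1 q.2 - a) ^ 2 + ‖q.1‖ ^ 2)
        (closedBall 0 r ×ˢ Set.Icc 0 T) :=
      ((hw.continuousOn.sub continuousOn_const).pow 2).add (by fun_prop)
    exact hdist.add (by fun_prop)
  · have := h0 y (mem_closedBall_zero_iff.1 hy)
    simp only [axisDistSq, mul_zero, add_zero]
    linarith [sq_nonneg ‖y‖]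
  · have hry : r ≤ ‖y‖ := by
      by_contra! hlt
      exact hy.2 (ball_subset_interior_closedBall (mem_ball_zero_iff.2 hlt))
    have hns : 0 ≤ 2 * n * s := mul_nonneg (by positivity) hs.1
    have : r ^ 2 ≤ ‖y‖ ^ 2 := pow_le_pow_left₀ hr hry 2
    simp only [axisDistSq]
    linarith [sq_nonneg (w y s - a)]
  · have hmin' : IsLocalMin (axisDistSq (fun z => w z s) a) y :=
      hmin.mono fun z hz => by simpa using hz
    have hnonneg :=
      mul_aEl_mul_divV_add_nonneg_of_isLocalMin_axisDistSq (hw.contDiffAt y hy s hs) hmin'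
    refine ⟨_, ?_, (hw.hasDerivWithinAt_axisDistSq hy hs a).add
      ((hasDerivWithinAt_id s _).const_mul (2 * n : ℝ))⟩
    linarith

end IsGraphicalMCFOn

theorem abs_le_supBall {u : E n → ℝ} (hu : ContinuousOn u (closedBall 0 r)) {x : E n}
    (hx : ‖x‖ ≤ r) : |u x| ≤ supBall u r := by
  have hbdd : BddAbove (Set.range fun y : closedBall (0 : E n) r => |u y|) := by
    rw [← Set.image_eq_range (fun y => |u y|)]
    exact ((isCompact_closedBall 0 r).image_of_continuousOn hu.abs).bddAbove
  exact le_ciSup hbdd ⟨x, mem_closedBall_zero_iff.2 hx⟩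

theorem IsGraphicalMCFOn.abs_le_supBall_add_sub_sqrt
    (hw : IsGraphicalMCFOn w (closedBall 0 r) T) (hr : 0 ≤ r) {x : E n} {t : ℝ}
    (ht : t ∈ Set.Icc 0 T) (hxt : ‖x‖ ^ 2 + 2 * n * t < r ^ 2) :
    |w x t| ≤ supBall (fun y => w y 0) r + (r - √(r ^ 2 - (‖x‖ ^ 2 + 2 * n * t))) := by
  set M := supBall (fun y => w y 0) r
  have hx : ‖x‖ ≤ r := by
    have hnt : 0 ≤ 2 * n * t := mul_nonneg (by positivity) ht.1
    exact le_of_sq_le_sq (by linarith) hr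
  have hM (y : E n) (hy : ‖y‖ ≤ r) : |w y 0| ≤ M :=
    abs_le_supBall (hw.continuousOn_initial (ht.1.trans ht.2)) hy
  have hcont : ContinuousOn (w x) (Set.Icc 0 t) :=
    (hw.continuousOn_time (mem_closedBall_zero_iff.2 hx)).mono (Set.Icc_subset_Icc_right ht.2)
  have havoid (a : ℝ) (ha : ∀ y : E n, ‖y‖ ≤ r → r ≤ |w y 0 - a|) (s : ℝ)
      (hs : s ∈ Set.Icc 0 t) : r ^ 2 - (‖x‖ ^ 2 + 2 * n * t) ≤ (w x s - a) ^ 2 := by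
    have h := hw.sphere_avoidance (a := a)
      (fun y hy => (sq_abs (w y 0 - a)) ▸ pow_le_pow_left₀ hr (ha y hy) 2) hx
      ⟨hs.1, hs.2.trans ht.2⟩
    have hst : 2 * n * s ≤ 2 * n * t := mul_le_mul_of_nonneg_left hs.2 (by positivity)
    simp only [axisDistSq] at h
    linarith
  have hupper : w x t - (M + r) ≤ -√(r ^ 2 - (‖x‖ ^ 2 + 2 * n * t)) := by
    refine le_neg_sqrt_of_forall_le_sq (f := fun s => w x s - (M + r)) (by fun_prop) ht.1
      (sub_pos.2 hxt) (by linarith [(abs_le.1 (hM x hx)).2]) (havoid _ fun y hy => ?_)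
    exact le_abs.2 (Or.inr (by linarith [(abs_le.1 (hM y hy)).2]))
  have hlower : -(M + r) - w x t ≤ -√(r ^ 2 - (‖x‖ ^ 2 + 2 * n * t)) := by
    refine le_neg_sqrt_of_forall_le_sq (f := fun s => -(M + r) - w x s) (by fun_prop) ht.1
      (sub_pos.2 hxt) (by linarith [(abs_le.1 (hM x hx)).1]) fun s hs => ?_
    rw [sub_sq_comm]
    refine havoid _ (fun y hy => ?_) s hs
    exact le_abs.2 (Or.inl (by linarith [(abs_le.1 (hM y hy)).1]))
  exact abs_le.2 ⟨by linarith, by linarith⟩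

end Avoidance

theorem stmt_17_general {n : ℕ} {w : E n → ℝ → ℝ} {R ρ : ℝ} (hR : 0 < R) (hρ0 : 0 < ρ)
    (hρ : 2 * n + 1 < ρ ^ 2) (hw : IsGraphicalMCFOn w (closedBall 0 (ρ * R)) (R ^ 2))
    {x : E n} (hx : ‖x‖ ≤ R) :
    |w x (R ^ 2)| ≤ supBall (fun y => w y 0) (ρ * R) + √(2 * n + 1) * R := by
  have hq : ‖x‖ ^ 2 + 2 * n * R ^ 2 ≤ (2 * n + 1) * R ^ 2 := by
    linarith [pow_le_pow_left₀ (norm_nonneg x) hx 2]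
  have hlt : ‖x‖ ^ 2 + 2 * n * R ^ 2 < (ρ * R) ^ 2 :=
    hq.trans_lt (by rw [mul_pow]; gcongr)
  have hbarrier := hw.abs_le_supBall_add_sub_sqrt (by positivity) ⟨by positivity, le_rfl⟩ hlt
  have hradius : ρ * R - √((ρ * R) ^ 2 - (‖x‖ ^ 2 + 2 * n * R ^ 2)) ≤ √(2 * n + 1) * R :=
    calc ρ * R - √((ρ * R) ^ 2 - (‖x‖ ^ 2 + 2 * n * R ^ 2))
        ≤ √(‖x‖ ^ 2 + 2 * n * R ^ 2) :=
          sub_sqrt_sq_sub_le_sqrt (by positivity) hlt.le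
      _ ≤ √((2 * n + 1) * R ^ 2) := Real.sqrt_le_sqrt hq
      _ = √(2 * n + 1) * R := by rw [Real.sqrt_mul (by positivity), Real.sqrt_sq hR.le]
  linarith

/-- maximum-principle barrier estimate for graphical mean curvature
flow: if `w` solves the flow on `ℝⁿ × [0, R²]` with `R > 1` and `ρ² > 2n+1`, then
`sup_{|x|≤R} |w(x,R²)| ≤ sup_{|x|≤ρR} |w(x,0)| + √(2n+1)·R + 1`. -/
theorem stmt_17 (n : ℕ) (w : E n → ℝ → ℝ) (R ρ : ℝ) (hR : 1 < R)
    (hρ0 : 0 < ρ) (hρ : 2 * n + 1 < ρ ^ 2)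
    (hw : ContDiff ℝ (⊤ : ℕ∞) fun p : E n × ℝ => w p.1 p.2)
    (hflow : ∀ x : E n, ∀ t ∈ Set.Icc (0 : ℝ) (R ^ 2),
      deriv (w x) t = aEl (fun y => w y t) x * divV (fun y => w y t) x) :
    ∀ x : E n, ‖x‖ ≤ R →
      |w x (R ^ 2)| ≤ supBall (fun y => w y 0) (ρ * R) +
        Real.sqrt (2 * n + 1) * R + 1 := by
  intro x hx
  have hsol := isGraphicalMCFOn_of_contDiff (hw.of_le (WithTop.coe_le_coe.2 le_top)) hflow
  linarith [stmt_17_general (by linarith) hρ0 hρ (hsol _) hx]
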